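/- Let M_κ be a multislice on n ≥ 4 points with κ_i ≥ 2 for all i ∈ [ℓ]. If A ⊆ M_κ is nonempty with vol(A) = α and Φ(A) = 2(1−α)/(n−1), then A is a dictator: there exist a coordinate j ∈ [n] and a set of colours S ⊆ [ℓ] such that A = { u ∈ M_κ : u_j ∈ S }. -/

import Mathlib

open Finset

noncomputable section

/-- The multislice: vectors in `[ℓ]^n` whose colour counts are given by `κ`. -/
def multislice (ℓ n : ℕ) (κ : Fin ℓ → ℕ) : Finset (Fin n → Fin ℓ) :=
  Finset.univ.filter fun u => ∀ i, (Finset.univ.filter fun j => u j = i).card = κ i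

/-- Expectation with respect to the uniform measure on the multislice. -/
def msExp (ℓ n : ℕ) (κ : Fin ℓ → ℕ) (f : (Fin n → Fin ℓ) → ℝ) : ℝ :=
  (∑ u ∈ multislice ℓ n κ, f u) / ((multislice ℓ n κ).card : ℝ)

/-- The indicator variable `x_{ji}`. -/
def xvar (ℓ n : ℕ) (j : Fin n) (i : Fin ℓ) (u : Fin n → Fin ℓ) : ℝ :=
  if u j = i then 1 else 0

/-- A function on the multislice has degree one if it is of the form
`c + ∑_j ∑_i c_{ji} x_{ji}`. -/
def degreeOne (ℓ n : ℕ) (κ : Fin ℓ → ℕ) (f : (Fin n → Fin ℓ) → ℝ) : Prop :=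
  ∃ (c : ℝ) (coef : Fin n → Fin ℓ → ℝ), ∀ u ∈ multislice ℓ n κ,
    f u = c + ∑ j, ∑ i, coef j i * xvar ℓ n j i u

/-- Distance of a real number to the set `{0,1}`. -/
def dist01 (x : ℝ) : ℝ := min |x| |x - 1|

/-- A function is Boolean on the multislice if it takes values in `{0,1}` there. -/
def booleanOn (ℓ n : ℕ) (κ : Fin ℓ → ℕ) (g : (Fin n → Fin ℓ) → ℝ) : Prop :=
  ∀ u ∈ multislice ℓ n κ, g u = 0 ∨ g u = 1

/-- A dictator: a function depending on at most one coordinate. -/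
def dictator (ℓ n : ℕ) (κ : Fin ℓ → ℕ) (g : (Fin n → Fin ℓ) → ℝ) : Prop :=
  ∃ j : Fin n, ∀ u ∈ multislice ℓ n κ, ∀ v ∈ multislice ℓ n κ, u j = v j → g u = g v

/-- The volume `|A|/|M_κ|` of a subset of the multislice. -/
def msVol (ℓ n : ℕ) (κ : Fin ℓ → ℕ) (A : Finset (Fin n → Fin ℓ)) : ℝ :=
  (A.card : ℝ) / ((multislice ℓ n κ).card : ℝ)

/-- The edge expansion `Φ(A)`: the probability that swapping two distinct coordinates (chosen
uniformly at random) of a uniformly random element of `A` gives an element outside `A`. -/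
def msExpansion (ℓ n : ℕ) (A : Finset (Fin n → Fin ℓ)) : ℝ :=
  (∑ u ∈ A, ((Finset.univ.filter fun q : Fin n × Fin n =>
      q.1 ≠ q.2 ∧ (u ∘ Equiv.swap q.1 q.2) ∉ A).card : ℝ)) /
    ((A.card : ℝ) * ((n : ℝ) * ((n : ℝ) - 1)))


set_option linter.unusedSectionVars false

section Abstract

variable {α : Type*} [Fintype α] [DecidableEq α]
variable {E : Type*} [NormedAddCommGroup E] [InnerProductSpace ℝ E]

/-- Permutations supported on `T`. -/
def permsOn (T : Finset α) : Finset (Equiv.Perm α) :=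
  Finset.univ.filter fun g => ∀ a, a ∉ T → g a = a

theorem mem_permsOn {T : Finset α} {g : Equiv.Perm α} :
    g ∈ permsOn T ↔ ∀ a, a ∉ T → g a = a := by simp [permsOn]

theorem one_mem_permsOn (T : Finset α) : (1 : Equiv.Perm α) ∈ permsOn T := by
  simp [mem_permsOn]

theorem mul_mem_permsOn {T : Finset α} {g h : Equiv.Perm α} (hg : g ∈ permsOn T)
    (hh : h ∈ permsOn T) : g * h ∈ permsOn T := by
  rw [mem_permsOn] at *
  intro a ha
  rw [Equiv.Perm.mul_apply, hh a ha, hg a ha]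

theorem inv_mem_permsOn {T : Finset α} {g : Equiv.Perm α} (hg : g ∈ permsOn T) :
    g⁻¹ ∈ permsOn T := by
  rw [mem_permsOn] at *
  intro a ha
  rw [Equiv.Perm.inv_eq_iff_eq, hg a ha]

theorem permsOn_mono {S T : Finset α} (h : S ⊆ T) {g : Equiv.Perm α} (hg : g ∈ permsOn S) :
    g ∈ permsOn T := by
  rw [mem_permsOn] at *
  exact fun a ha => hg a (fun h' => ha (h h'))

theorem swap_mem_permsOn {T : Finset α} {j k : α} (hj : j ∈ T) (hk : k ∈ T) :
    Equiv.swap j k ∈ permsOn T := by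
  rw [mem_permsOn]
  intro a ha
  apply Equiv.swap_apply_of_ne_of_ne <;> rintro rfl <;> contradiction

theorem permsOn_apply_mem {T : Finset α} {g : Equiv.Perm α} (hg : g ∈ permsOn T) {a : α}
    (ha : a ∈ T) : g a ∈ T := by
  by_contra h
  have := mem_permsOn.1 hg _ h
  exact h (by rw [g.injective this]; exact ha)

/-- Averaging over the permutations supported on `T`. -/
def av (ρ : Equiv.Perm α →* (E →ₗ[ℝ] E)) (T : Finset α) : E →ₗ[ℝ] E :=
  ((permsOn T).card : ℝ)⁻¹ • ∑ g ∈ permsOn T, ρ g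

variable (ρ : Equiv.Perm α →* (E →ₗ[ℝ] E))

theorem av_apply (T : Finset α) (x : E) :
    av ρ T x = ((permsOn T).card : ℝ)⁻¹ • ∑ g ∈ permsOn T, ρ g x := by
  simp [av]

theorem permsOn_card_ne (T : Finset α) : ((permsOn T).card : ℝ) ≠ 0 := by
  have := Finset.card_pos.2 ⟨_, one_mem_permsOn T⟩
  positivity

theorem rho_mul (g h : Equiv.Perm α) (x : E) : ρ (g * h) x = ρ g (ρ h x) := by
  rw [map_mul]; rfl

theorem av_inv {T : Finset α} {g : Equiv.Perm α} (hg : g ∈ permsOn T) (x : E) :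
    ρ g (av ρ T x) = av ρ T x := by
  rw [av_apply, map_smul, map_sum]
  congr 1
  refine Finset.sum_nbij' (fun h => g * h) (fun h => g⁻¹ * h) ?_ ?_ ?_ ?_ ?_
  · intro h hh; exact mul_mem_permsOn hg hh
  · intro h hh; exact mul_mem_permsOn (inv_mem_permsOn hg) hh
  · intro h _; simp
  · intro h _; simp
  · intro h _; rw [rho_mul]

theorem av_right {T : Finset α} {g : Equiv.Perm α} (hg : g ∈ permsOn T) (x : E) :
    av ρ T (ρ g x) = av ρ T x := by
  rw [av_apply, av_apply]
  congr 1
  refine Finset.sum_nbij' (fun h => h * g) (fun h => h * g⁻¹) ?_ ?_ ?_ ?_ ?_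
  · intro h hh; exact mul_mem_permsOn hh hg
  · intro h hh; exact mul_mem_permsOn hh (inv_mem_permsOn hg)
  · intro h _; simp
  · intro h _; simp
  · intro h _; rw [rho_mul]

theorem av_of_inv {T : Finset α} {x : E} (hx : ∀ g ∈ permsOn T, ρ g x = x) :
    av ρ T x = x := by
  rw [av_apply, Finset.sum_congr rfl hx, Finset.sum_const, ← Nat.cast_smul_eq_nsmul ℝ, smul_smul,
    inv_mul_cancel₀ (permsOn_card_ne T), one_smul]

theorem av_av_of_subset {S T : Finset α} (h : S ⊆ T) (x : E) :
    av ρ S (av ρ T x) = av ρ T x :=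
  av_of_inv ρ fun _ hg => av_inv ρ (permsOn_mono h hg) x

theorem av_av_of_subset' {S T : Finset α} (h : S ⊆ T) (x : E) :
    av ρ T (av ρ S x) = av ρ T x := by
  rw [av_apply ρ S, map_smul, map_sum,
    Finset.sum_congr rfl fun g hg => av_right ρ (permsOn_mono h hg) x, Finset.sum_const,
    ← Nat.cast_smul_eq_nsmul ℝ, smul_smul, inv_mul_cancel₀ (permsOn_card_ne S), one_smul]

theorem sum_swap_av {T : Finset α} {k : α} (hk : k ∈ T) (x : E) :
    ∑ m ∈ T, ρ (Equiv.swap m k) (av ρ (T.erase k) x) = (T.card : ℝ) • av ρ T x := by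
  have h1 : av ρ T (∑ m ∈ T, ρ (Equiv.swap m k) (av ρ (T.erase k) x))
      = (T.card : ℝ) • av ρ T x := by
    rw [map_sum, Finset.sum_congr rfl (g := fun _ => av ρ T x), Finset.sum_const,
      Nat.cast_smul_eq_nsmul]
    intro m hm
    rw [av_right ρ (swap_mem_permsOn hm hk), av_av_of_subset' ρ (Finset.erase_subset _ _)]
  rw [← h1]
  refine (av_of_inv ρ ?_).symm
  intro g hg
  rw [map_sum]
  refine Finset.sum_nbij' (fun m => g m) (fun m => g⁻¹ m) ?_ ?_ ?_ ?_ ?_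
  · intro m hm; exact permsOn_apply_mem hg hm
  · intro m hm; exact permsOn_apply_mem (inv_mem_permsOn hg) hm
  · intro m _; simp
  · intro m _; simp
  · intro m hm
    have h2 : Equiv.swap (g m) k * g * Equiv.swap m k ∈ permsOn (T.erase k) := by
      have h3 : Equiv.swap (g m) k * g * Equiv.swap m k ∈ permsOn T :=
        mul_mem_permsOn (mul_mem_permsOn (swap_mem_permsOn (permsOn_apply_mem hg hm) hk) hg)
          (swap_mem_permsOn hm hk)
      rw [mem_permsOn] at h3 ⊢
      intro a ha
      by_cases hak : a = k
      · subst hak; simp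
      · exact h3 a (fun h => ha (Finset.mem_erase.2 ⟨hak, h⟩))
    have h4 := av_inv ρ h2 x
    conv_rhs => rw [← h4]
    rw [← rho_mul, ← rho_mul]
    congr 2
    simp [← mul_assoc]

theorem av_av_ne {T : Finset α} {m k : α} (hm : m ∈ T) (hk : k ∈ T) (hmk : m ≠ k) (x : E) :
    ((T.card : ℝ) - 1) • av ρ (T.erase m) (av ρ (T.erase k) x)
      = (T.card : ℝ) • av ρ T x - ρ (Equiv.swap m k) (av ρ (T.erase k) x) := by
  have h := congrArg (av ρ (T.erase m)) (sum_swap_av ρ hk x)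
  rw [map_smul, av_av_of_subset ρ (Finset.erase_subset _ _), map_sum,
    ← Finset.add_sum_erase _ _ hm,
    Finset.sum_congr rfl (g := fun _ => av ρ (T.erase m) (av ρ (T.erase k) x)),
    Finset.sum_const, ← Nat.cast_smul_eq_nsmul ℝ, Finset.card_erase_of_mem hm,
    Nat.cast_sub (Finset.card_pos.2 ⟨_, hm⟩), Nat.cast_one] at h
  · rw [← h, av_of_inv ρ (x := ρ (Equiv.swap m k) (av ρ (T.erase k) x))]
    · abel
    · intro g hg
      have h2 : Equiv.swap m k * g * Equiv.swap m k ∈ permsOn (T.erase k) := by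
        rw [mem_permsOn] at hg ⊢
        intro a ha
        rw [Equiv.Perm.mul_apply, Equiv.Perm.mul_apply]
        by_cases hak : a = k
        · subst hak; simp [hg]
        · have haT : a ∉ T := fun h => ha (Finset.mem_erase.2 ⟨hak, h⟩)
          have ham : a ≠ m := by rintro rfl; exact haT hm
          rw [Equiv.swap_apply_of_ne_of_ne ham hak, hg a (by simp [haT]),
            Equiv.swap_apply_of_ne_of_ne ham hak]
      have h4 := av_inv ρ h2 x
      conv_rhs => rw [← h4]
      rw [← rho_mul, ← rho_mul]
      congr 2
      simp [← mul_assoc]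
  · intro j hj
    apply av_right
    apply swap_mem_permsOn hj
    exact Finset.mem_erase.2 ⟨hmk.symm, hk⟩

/-- Sum of the one-point-stabiliser averages. -/
def avQ (T : Finset α) : E →ₗ[ℝ] E := ∑ m ∈ T, av ρ (T.erase m)

theorem avQ_apply (T : Finset α) (x : E) : avQ ρ T x = ∑ m ∈ T, av ρ (T.erase m) x := by
  simp [avQ]

theorem avQ_av {T : Finset α} {k : α} (hk : k ∈ T) {x : E} (hx : av ρ T x = 0) :
    ((T.card : ℝ) - 1) • avQ ρ T (av ρ (T.erase k) x) = (T.card : ℝ) • av ρ (T.erase k) x := by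
  rw [avQ_apply, Finset.smul_sum, ← Finset.add_sum_erase _ _ hk,
    Finset.sum_congr rfl fun m hm => av_av_ne ρ (Finset.mem_of_mem_erase hm) hk
      (Finset.ne_of_mem_erase hm) x, hx, av_av_of_subset ρ le_rfl]
  have h := sum_swap_av ρ hk x
  rw [hx, smul_zero, ← Finset.add_sum_erase _ _ hk, Equiv.swap_self] at h
  have h1 : ρ (Equiv.refl α) (av ρ (T.erase k) x) = av ρ (T.erase k) x := by
    change ρ 1 _ = _
    rw [map_one]; rfl
  rw [h1] at h
  simp only [smul_zero, zero_sub, Finset.sum_neg_distrib]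
  rw [← eq_neg_iff_add_eq_zero] at h
  rw [← h, sub_smul, one_smul]
  abel

theorem avQ_avQ {T : Finset α} {x : E} (hx : av ρ T x = 0) :
    ((T.card : ℝ) - 1) • avQ ρ T (avQ ρ T x) = (T.card : ℝ) • avQ ρ T x := by
  conv_lhs => rw [avQ_apply ρ T x]
  rw [map_sum, Finset.smul_sum, Finset.sum_congr rfl fun k hk => avQ_av ρ hk hx,
    ← Finset.smul_sum, ← avQ_apply]

theorem av_inner (hρ : ∀ g x y, inner ℝ (ρ g x) (ρ g y) = inner ℝ x y) (T : Finset α) (x : E) {y : E} (hy : ∀ g ∈ permsOn T, ρ g y = y) :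
    inner ℝ (av ρ T x) y = inner ℝ x y := by
  rw [av_apply, real_inner_smul_left, sum_inner,
    Finset.sum_congr rfl (g := fun _ => inner ℝ x y), Finset.sum_const, nsmul_eq_mul, ← mul_assoc,
    inv_mul_cancel₀ (permsOn_card_ne T), one_mul]
  intro g hg
  conv_lhs => rw [← hy g hg]
  exact hρ g x y

theorem av_inner_self (hρ : ∀ g x y, inner ℝ (ρ g x) (ρ g y) = inner ℝ x y) (T : Finset α)
    (x y : E) : inner ℝ (av ρ T x) (av ρ T y) = inner ℝ x (av ρ T y) :=
  av_inner ρ hρ T x fun _ hg => av_inv ρ hg y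

theorem av_symm (hρ : ∀ g x y, inner ℝ (ρ g x) (ρ g y) = inner ℝ x y) (T : Finset α)
    (x y : E) : inner ℝ (av ρ T x) y = inner ℝ x (av ρ T y) := by
  rw [← av_inner_self ρ hρ, real_inner_comm, ← av_inner_self ρ hρ, real_inner_comm]

theorem avQ_symm (hρ : ∀ g x y, inner ℝ (ρ g x) (ρ g y) = inner ℝ x y) (T : Finset α)
    (x y : E) : inner ℝ (avQ ρ T x) y = inner ℝ x (avQ ρ T y) := by
  rw [avQ_apply, avQ_apply, sum_inner, inner_sum]
  exact Finset.sum_congr rfl fun m _ => av_symm ρ hρ _ _ _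

theorem norm_sub_av (hρ : ∀ g x y, inner ℝ (ρ g x) (ρ g y) = inner ℝ x y) (T : Finset α)
    (x : E) : ‖x - av ρ T x‖ ^ 2 = ‖x‖ ^ 2 - inner ℝ x (av ρ T x) := by
  rw [norm_sub_sq_real, ← real_inner_self_eq_norm_sq (av ρ T x), av_inner_self ρ hρ]
  ring

theorem avQ_norm (hρ : ∀ g x y, inner ℝ (ρ g x) (ρ g y) = inner ℝ x y) (T : Finset α)
    {y : E} (hy : av ρ T y = 0) :
    ‖((T.card : ℝ) - 1) • avQ ρ T y - (T.card : ℝ) • y‖ ^ 2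
      = T.card * (T.card * ‖y‖ ^ 2 - (T.card - 1) * inner ℝ y (avQ ρ T y)) := by
  have h1 : ((T.card : ℝ) - 1) * inner ℝ (avQ ρ T y) (avQ ρ T y)
      = T.card * inner ℝ y (avQ ρ T y) := by
    rw [avQ_symm ρ hρ, ← real_inner_smul_right, avQ_avQ ρ hy, real_inner_smul_right]
  rw [← real_inner_self_eq_norm_sq, ← real_inner_self_eq_norm_sq]
  simp only [inner_sub_left, inner_sub_right, real_inner_smul_left, real_inner_smul_right]
  rw [real_inner_comm y (avQ ρ T y)]
  linear_combination ((T.card : ℝ) - 1) * h1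

/-- The Dirichlet form of the transpositions inside `T`. -/
def dirich (T : Finset α) (x : E) : ℝ :=
  ∑ j ∈ T, ∑ k ∈ T, ‖x - ρ (Equiv.swap j k) x‖ ^ 2

theorem dirich_sub_av (T : Finset α) (x : E) :
    dirich ρ T (x - av ρ T x) = dirich ρ T x := by
  unfold dirich
  refine Finset.sum_congr rfl fun j hj => Finset.sum_congr rfl fun k hk => ?_
  rw [map_sub, av_inv ρ (swap_mem_permsOn hj hk)]
  congr 2
  abel

theorem sum_erase_zero {T : Finset α} {F : α → α → ℝ} (hF : ∀ a, F a a = 0) :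
    ∑ m ∈ T, ∑ j ∈ T.erase m, ∑ k ∈ T.erase m, F j k
      = ((T.card : ℝ) - 2) * ∑ j ∈ T, ∑ k ∈ T, F j k := by
  have h1 : ∀ m ∈ T, ∑ j ∈ T.erase m, ∑ k ∈ T.erase m, F j k
      = ∑ j ∈ T, ∑ k ∈ T, F j k - ∑ k ∈ T, F m k - ∑ j ∈ T, F j m := by
    intro m hm
    have h2 : ∀ j, ∑ k ∈ T.erase m, F j k = ∑ k ∈ T, F j k - F j m := fun j => by
      rw [← Finset.add_sum_erase _ _ hm]; ring
    simp only [h2]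
    rw [Finset.sum_sub_distrib, ← Finset.add_sum_erase T (fun j => ∑ k ∈ T, F j k) hm,
      ← Finset.add_sum_erase T (fun j => F j m) hm, hF]
    ring
  rw [Finset.sum_congr rfl h1, Finset.sum_sub_distrib, Finset.sum_sub_distrib, Finset.sum_const,
    Finset.sum_comm (f := fun m j => F j m), nsmul_eq_mul]
  ring

theorem swap_self_apply' (j : α) (x : E) : ρ (Equiv.swap j j) x = x := by
  rw [Equiv.swap_self]
  change ρ 1 x = x
  rw [map_one]; rfl

theorem sum_dirich (T : Finset α) (x : E) :
    ∑ m ∈ T, dirich ρ (T.erase m) x = ((T.card : ℝ) - 2) * dirich ρ T x := by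
  unfold dirich
  apply sum_erase_zero
  intro a
  rw [swap_self_apply']
  simp

theorem poincare_step (hρ : ∀ g x y, inner ℝ (ρ g x) (ρ g y) = inner ℝ x y) (T : Finset α)
    (hT : T.Nonempty)
    (ih : ∀ m ∈ T, ∀ x, 4 * ((T.card : ℝ) - 1) * ‖x - av ρ (T.erase m) x‖ ^ 2
      ≤ dirich ρ (T.erase m) x) (x : E) :
    4 * (T.card : ℝ) ^ 2 * (T.card - 2) * ‖x - av ρ T x‖ ^ 2
      + 4 * ‖((T.card : ℝ) - 1) • avQ ρ T (x - av ρ T x) - (T.card : ℝ) • (x - av ρ T x)‖ ^ 2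
      ≤ T.card * (T.card - 2) * dirich ρ T x := by
  rw [← dirich_sub_av]
  set y := x - av ρ T x with hy
  have hy0 : av ρ T y = 0 := by
    rw [hy, map_sub, av_av_of_subset ρ le_rfl, sub_self]
  have h1 := Finset.sum_le_sum fun m hm => ih m hm y
  rw [sum_dirich] at h1
  simp only [norm_sub_av ρ hρ] at h1
  rw [← Finset.mul_sum, Finset.sum_sub_distrib, ← inner_sum, ← avQ_apply, Finset.sum_const,
    nsmul_eq_mul] at h1
  rw [avQ_norm ρ hρ T hy0]
  have h0 : (0 : ℝ) ≤ T.card := by positivity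
  have := mul_le_mul_of_nonneg_left h1 h0
  linarith

theorem poincare (hρ : ∀ g x y, inner ℝ (ρ g x) (ρ g y) = inner ℝ x y) (t : ℕ) :
    ∀ T : Finset α, T.card = t → ∀ x : E,
      4 * (t : ℝ) * ‖x - av ρ T x‖ ^ 2 ≤ dirich ρ T x := by
  have hone : ∀ T : Finset α, T.card ≤ 1 → ∀ x : E, av ρ T x = x := by
    intro T hT x
    apply av_of_inv
    intro g hg
    have : g = 1 := by
      ext a
      by_cases ha : a ∈ T
      · exact Finset.card_le_one.1 hT _ (permsOn_apply_mem hg ha) _ ha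
      · exact mem_permsOn.1 hg a ha
    rw [this, map_one]; rfl
  have hnn : ∀ (T : Finset α) (x : E), 0 ≤ dirich ρ T x := fun T x =>
    Finset.sum_nonneg fun _ _ => Finset.sum_nonneg fun _ _ => by positivity
  induction t with
  | zero => intro T hT x; simpa using hnn T x
  | succ t ih =>
    intro T hT x
    rcases lt_trichotomy t 1 with h | h | h
    · rw [hone T (by omega), sub_self]
      simpa using hnn T x
    · subst h
      obtain ⟨j, k, hjk, rfl⟩ := Finset.card_eq_two.1 hT
      have h1 := sum_swap_av ρ (T := {j, k}) (k := k) (by simp) x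
      rw [hone (Finset.erase _ _) (by rw [Finset.card_erase_of_mem (by simp), hT]),
        Finset.sum_pair hjk, swap_self_apply', hT] at h1
      have h2 : x - av ρ {j, k} x = (2⁻¹ : ℝ) • (x - ρ (Equiv.swap j k) x) := by
        have : av ρ {j, k} x = (2⁻¹ : ℝ) • (ρ (Equiv.swap j k) x + x) := by
          rw [h1, smul_smul]; norm_num
        rw [this]
        module
      rw [h2, norm_smul]
      unfold dirich
      rw [Finset.sum_pair hjk, Finset.sum_pair hjk, Finset.sum_pair hjk, swap_self_apply',
        swap_self_apply', Equiv.swap_comm k j, sub_self, norm_zero]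
      norm_num
      nlinarith
    · have h2 := poincare_step ρ hρ T (Finset.card_pos.1 (by omega)) (fun m hm y => by
        have := ih (T.erase m) (by rw [Finset.card_erase_of_mem hm, hT]; rfl) y
        rw [hT]
        push_cast
        simpa using this) x
      rw [hT] at h2
      have h3 : (2 : ℝ) ≤ t := by exact_mod_cast h
      push_cast at h2 ⊢
      have h4 : (0 : ℝ) < (t + 1) * (t + 1 - 2) := by apply mul_pos <;> linarith
      refine le_of_mul_le_mul_left ?_ h4
      refine le_trans (le_trans (le_of_eq ?_) (le_add_of_nonneg_right ?_)) h2
      · ring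
      · positivity

theorem poincare_eq (hρ : ∀ g x y, inner ℝ (ρ g x) (ρ g y) = inner ℝ x y) (T : Finset α)
    (hT : 3 ≤ T.card) (x : E) (hx : dirich ρ T x = 4 * (T.card : ℝ) * ‖x - av ρ T x‖ ^ 2) :
    (T.card : ℝ) • x = ((T.card : ℝ) - 1) • ∑ m ∈ T, av ρ (T.erase m) x
      - ((T.card : ℝ) * ((T.card : ℝ) - 2)) • av ρ T x := by
  have h2 := poincare_step ρ hρ T (Finset.card_pos.1 (by omega)) (fun m hm y => by
    have := poincare ρ hρ (T.card - 1) (T.erase m) (by rw [Finset.card_erase_of_mem hm]) y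
    rwa [Nat.cast_sub (by omega), Nat.cast_one] at this) x
  rw [hx] at h2
  have h3 : ‖((T.card : ℝ) - 1) • avQ ρ T (x - av ρ T x) - (T.card : ℝ) • (x - av ρ T x)‖ ^ 2
    = 0 := le_antisymm (by linarith) (by positivity)
  rw [sq_eq_zero_iff, norm_eq_zero, sub_eq_zero, map_sub] at h3
  have h4 : avQ ρ T (av ρ T x) = (T.card : ℝ) • av ρ T x := by
    rw [avQ_apply, Finset.sum_congr rfl fun m _ => av_av_of_subset ρ (Finset.erase_subset m T) x,
      Finset.sum_const, Nat.cast_smul_eq_nsmul]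
  rw [h4, avQ_apply] at h3
  have h5 : (T.card : ℝ) • x = (T.card : ℝ) • (x - av ρ T x) + (T.card : ℝ) • av ρ T x := by
    rw [smul_sub, sub_add_cancel]
  rw [h5, ← h3]
  module

end Abstract

section Combin

variable {α : Type*} [Fintype α] [DecidableEq α] {C : Type*}

theorem sum_swap_diff (h : α → C → ℝ) (u : α → C) {j k : α} (hjk : j ≠ k) :
    ∑ m, h m (u m) - ∑ m, h m ((u ∘ Equiv.swap j k) m)
      = h j (u j) + h k (u k) - h j (u k) - h k (u j) := by
  rw [← Finset.sum_sub_distrib, ← Finset.add_sum_erase _ _ (Finset.mem_univ j),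
    ← Finset.add_sum_erase _ _ (Finset.mem_erase.2 ⟨hjk.symm, Finset.mem_univ k⟩),
    Finset.sum_eq_zero]
  · simp; ring
  · intro m hm
    simp only [Finset.mem_erase] at hm
    simp [Equiv.swap_apply_of_ne_of_ne hm.2.1 hm.1]

theorem exists_perm_four {j k p q x y z w : α} (hjk : j ≠ k) (hjp : j ≠ p) (hjq : j ≠ q)
    (hkp : k ≠ p) (hkq : k ≠ q) (hpq : p ≠ q) (hxy : x ≠ y) (hxz : x ≠ z) (hxw : x ≠ w)
    (hyz : y ≠ z) (hyw : y ≠ w) (hzw : z ≠ w) :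
    ∃ σ : Equiv.Perm α, σ j = x ∧ σ k = y ∧ σ p = z ∧ σ q = w := by
  have key : ∀ {j k p q : α}, j ≠ k → j ≠ p → j ≠ q → k ≠ p → k ≠ q → p ≠ q →
      Function.Injective ![j, k, p, q] := by
    intro j k p q h1 h2 h3 h4 h5 h6 a b hab
    fin_cases a <;> fin_cases b <;> simp_all
  have : MulAction.IsMultiplyPretransitive (Equiv.Perm α) α 4 :=
    Equiv.Perm.isMultiplyPretransitive α 4
  obtain ⟨σ, hσ⟩ := MulAction.exists_smul_eq (Equiv.Perm α)
    (⟨_, key hjk hjp hjq hkp hkq hpq⟩ : Fin 4 ↪ α) ⟨_, key hxy hxz hxw hyz hyw hzw⟩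
  refine ⟨σ, ?_, ?_, ?_, ?_⟩
  · simpa using DFunLike.congr_fun hσ 0
  · simpa using DFunLike.congr_fun hσ 1
  · simpa using DFunLike.congr_fun hσ 2
  · simpa using DFunLike.congr_fun hσ 3

theorem star_lemma (hα : 4 ≤ Fintype.card α) (sens : α → α → Prop)
    (hsymm : ∀ a b, sens a b → sens b a) (hirr : ∀ a, ¬ sens a a)
    (htri : ∀ a b c, sens a b → sens a c ∨ sens b c)
    (hdis : ∀ j k p q, j ≠ k → j ≠ p → j ≠ q → k ≠ p → k ≠ q → p ≠ q →
      sens j k → sens p q → False) :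
    ∃ j, ∀ r s, r ≠ j → s ≠ j → ¬ sens r s := by
  by_cases h : ∃ j k, sens j k
  · obtain ⟨j, k, hjk⟩ := h
    have hne : j ≠ k := by rintro rfl; exact hirr _ hjk
    obtain ⟨p, hp⟩ : ∃ p, p ∉ ({j, k} : Finset α) := by
      by_contra! hh
      have := Finset.card_le_card (fun a _ => hh a : (Finset.univ : Finset α) ⊆ _)
      have h2 := Finset.card_le_two (a := j) (b := k)
      rw [Finset.card_univ] at this
      omega
    obtain ⟨q, hq⟩ : ∃ q, q ∉ ({j, k, p} : Finset α) := by
      by_contra! hh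
      have := Finset.card_le_card (fun a _ => hh a : (Finset.univ : Finset α) ⊆ _)
      have h2 := Finset.card_le_three (a := j) (b := k) (c := p)
      rw [Finset.card_univ] at this
      omega
    simp only [Finset.mem_insert, Finset.mem_singleton, not_or] at hp hq
    have main : ∀ j k p q, j ≠ k → j ≠ p → j ≠ q → k ≠ p → k ≠ q → p ≠ q → sens j k → sens j p →
        sens j q → ∀ r s, r ≠ j → s ≠ j → ¬ sens r s := by
      intro j k p q h1 h2 h3 h4 h5 h6 hk hp hq r s hr hs hrs
      have hrs' : r ≠ s := by rintro rfl; exact hirr _ hrs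
      have : (r ≠ k ∧ s ≠ k) ∨ (r ≠ p ∧ s ≠ p) ∨ (r ≠ q ∧ s ≠ q) := by
        by_contra! hh
        obtain ⟨e1, e2, e3⟩ := hh
        by_cases c1 : r = k
        · exact h6 ((e2 fun h => h4 (c1.symm.trans h)).symm.trans
            (e3 fun h => h5 (c1.symm.trans h)))
        · have c2 := e1 c1
          have c3 : r = p := by
            by_contra h
            exact h4 (c2.symm.trans (e2 h))
          have c4 : r = q := by
            by_contra h
            exact h5 (c2.symm.trans (e3 h))
          exact h6 (c3.symm.trans c4)
      rcases this with ⟨a, b⟩ | ⟨a, b⟩ | ⟨a, b⟩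
      · exact hdis j k r s h1 hr.symm hs.symm a.symm b.symm hrs' hk hrs
      · exact hdis j p r s h2 hr.symm hs.symm a.symm b.symm hrs' hp hrs
      · exact hdis j q r s h3 hr.symm hs.symm a.symm b.symm hrs' hq hrs
    have n1 : j ≠ p := fun h => hp.1 h.symm
    have n2 : k ≠ p := fun h => hp.2 h.symm
    have n3 : j ≠ q := fun h => hq.1 h.symm
    have n4 : k ≠ q := fun h => hq.2.1 h.symm
    have n5 : p ≠ q := fun h => hq.2.2 h.symm
    rcases htri j k p hjk with a | a <;> rcases htri j k q hjk with b | b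
    · exact ⟨j, main j k p q hne n1 n3 n2 n4 n5 hjk a b⟩
    · exact (hdis j p k q n1 hne n3 n2.symm n5 n4 a b).elim
    · exact (hdis j q k p n3 hne n1 n4.symm n5.symm n2 b a).elim
    · exact ⟨k, main k j p q hne.symm n2 n4 n1 n3 n5 (hsymm _ _ hjk) a b⟩
  · push Not at h
    have : Nonempty α := Fintype.card_pos_iff.1 (by omega)
    exact ⟨Classical.arbitrary α, fun r s _ _ => h r s⟩

end Combin

theorem comp_perm_mem {ℓ n : ℕ} {κ : Fin ℓ → ℕ} {u : Fin n → Fin ℓ}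
    (hu : u ∈ multislice ℓ n κ) (σ : Equiv.Perm (Fin n)) : u ∘ σ ∈ multislice ℓ n κ := by
  simp only [multislice, Finset.mem_filter, Finset.mem_univ, true_and] at hu ⊢
  intro i
  rw [← hu i]
  apply Finset.card_bij (fun a _ => σ a)
  · intro a ha; simpa using ha
  · intro a _ b _ h; exact σ.injective h
  · intro b hb; exact ⟨σ⁻¹ b, by simpa using hb, by simp⟩

theorem exists_perm_comp {ℓ n : ℕ} {κ : Fin ℓ → ℕ} {u v : Fin n → Fin ℓ}
    (hu : u ∈ multislice ℓ n κ) (hv : v ∈ multislice ℓ n κ) :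
    ∃ σ : Equiv.Perm (Fin n), u ∘ σ = v := by
  simp only [multislice, Finset.mem_filter, Finset.mem_univ, true_and] at hu hv
  have h : ∀ i, Nonempty ({j // v j = i} ≃ {j // u j = i}) := by
    intro i
    rw [← Fintype.card_eq, Fintype.card_subtype, Fintype.card_subtype, hu, hv]
  refine ⟨Equiv.ofFiberEquiv (f := v) (g := u) fun i => (h i).some, ?_⟩
  ext1 j
  exact Equiv.ofFiberEquiv_map _ j

theorem exists_perm_fix {ℓ n : ℕ} {κ : Fin ℓ → ℕ} {u v : Fin n → Fin ℓ}
    (hu : u ∈ multislice ℓ n κ) (hv : v ∈ multislice ℓ n κ) {m : Fin n} (hm : u m = v m) :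
    ∃ σ : Equiv.Perm (Fin n), σ m = m ∧ u ∘ σ = v := by
  obtain ⟨σ, hσ⟩ := exists_perm_comp hu hv
  refine ⟨Equiv.swap m (σ m) * σ, by simp, ?_⟩
  rw [← hσ]
  have h1 : u (σ m) = u m := by rw [hm, ← hσ]; rfl
  ext1 a
  simp only [Function.comp_apply, Equiv.Perm.mul_apply]
  by_cases h2 : σ a = m
  · rw [h2, Equiv.swap_apply_left, h1]
  · by_cases h3 : σ a = σ m
    · rw [h3, Equiv.swap_apply_right, h1]
    · rw [Equiv.swap_apply_of_ne_of_ne h2 h3]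

theorem exists_four {ℓ n : ℕ} {κ : Fin ℓ → ℕ} (hκ : ∀ i, 2 ≤ κ i) {u₀ : Fin n → Fin ℓ}
    (hu : u₀ ∈ multislice ℓ n κ) {j k p q : Fin n} (hjk : j ≠ k) (hjp : j ≠ p) (hjq : j ≠ q)
    (hkp : k ≠ p) (hkq : k ≠ q) (hpq : p ≠ q) {a b c d : Fin ℓ} (hab : a ≠ b) (hcd : c ≠ d) :
    ∃ u ∈ multislice ℓ n κ, u j = a ∧ u k = b ∧ u p = c ∧ u q = d := by
  have hfib : ∀ i, 1 < (Finset.univ.filter fun j => u₀ j = i).card := by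
    intro i
    have := (Finset.mem_filter.1 hu).2 i
    have := hκ i
    omega
  have hex : ∀ i, ∀ x, ∃ y, u₀ y = i ∧ y ≠ x := fun i x => by
    obtain ⟨y, hy, hyx⟩ := Finset.exists_mem_ne (hfib i) x
    exact ⟨y, by simpa using hy, hyx⟩
  obtain ⟨x, hx, -⟩ := hex a j
  obtain ⟨y, hy, -⟩ := hex b j
  have hxy : x ≠ y := by rintro rfl; exact hab (hx.symm.trans hy)
  have hex2 : ∀ i, ∃ z, u₀ z = i ∧ x ≠ z ∧ y ≠ z := by
    intro i
    by_cases hi : i = a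
    · obtain ⟨z, hz, hzx⟩ := hex i x
      refine ⟨z, hz, hzx.symm, ?_⟩
      rintro rfl
      exact hab (by rw [← hi, ← hz, hy])
    · obtain ⟨z, hz, hzx⟩ := hex i y
      refine ⟨z, hz, ?_, hzx.symm⟩
      rintro rfl
      exact hi (by rw [← hz, hx])
  obtain ⟨z, hz, hxz, hyz⟩ := hex2 c
  obtain ⟨w, hw, hxw, hyw⟩ := hex2 d
  have hzw : z ≠ w := by rintro rfl; exact hcd (hz.symm.trans hw)
  obtain ⟨σ, h1, h2, h3, h4⟩ :=
    exists_perm_four hjk hjp hjq hkp hkq hpq hxy hxz hxw hyz hyw hzw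
  refine ⟨u₀ ∘ σ, comp_perm_mem hu σ, ?_, ?_, ?_, ?_⟩ <;> simp [*]

theorem boolean_degree_one {ℓ n : ℕ} (hn : 4 ≤ n) {κ : Fin ℓ → ℕ} (hκ : ∀ i, 2 ≤ κ i)
    (f : (Fin n → Fin ℓ) → ℝ) (hf : ∀ u ∈ multislice ℓ n κ, f u = 0 ∨ f u = 1)
    (c₀ : ℝ) (h : Fin n → Fin ℓ → ℝ)
    (hh : ∀ u ∈ multislice ℓ n κ, f u = c₀ + ∑ m, h m (u m)) {u₀ : Fin n → Fin ℓ}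
    (hu₀ : u₀ ∈ multislice ℓ n κ) :
    ∃ j, ∀ u ∈ multislice ℓ n κ, ∀ v ∈ multislice ℓ n κ, u j = v j → f u = f v := by
  have hpos : ∀ r s, (∃ a b, h r a - h r b - h s a + h s b ≠ 0) →
      ∃ a b, 0 < h r a - h r b - h s a + h s b := by
    rintro r s ⟨a, b, hab⟩
    rcases lt_or_gt_of_ne hab with h1 | h1
    · exact ⟨b, a, by linarith⟩
    · exact ⟨a, b, h1⟩
  obtain ⟨j, hj⟩ := star_lemma (α := Fin n) (by simpa using hn)
    (fun r s => ∃ a b, h r a - h r b - h s a + h s b ≠ 0)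
    (by
      rintro r s ⟨a, b, hab⟩
      exact ⟨b, a, fun h0 => hab (by linarith)⟩)
    (by rintro r ⟨a, b, hab⟩; exact hab (by ring))
    (by
      rintro r s t ⟨a, b, hab⟩
      by_contra! h0
      exact hab (by linarith [h0.1 a b, h0.2 a b]))
    (by
      intro j k p q hjk hjp hjq hkp hkq hpq h1 h2
      obtain ⟨a, b, hab⟩ := hpos _ _ h1
      obtain ⟨c, d, hcd⟩ := hpos _ _ h2
      have nab : a ≠ b := by rintro rfl; linarith
      have ncd : c ≠ d := by rintro rfl; linarith
      obtain ⟨u, hu, rfl, rfl, rfl, rfl⟩ := exists_four hκ hu₀ hjk hjp hjq hkp hkq hpq nab ncd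
      have hu1 := comp_perm_mem hu (Equiv.swap j k)
      have hu2 := comp_perm_mem hu1 (Equiv.swap p q)
      have e1 := sum_swap_diff h u hjk
      have e2 := sum_swap_diff h (u ∘ Equiv.swap j k) hpq
      have e3 : (u ∘ Equiv.swap j k) p = u p := by
        simp [Equiv.swap_apply_of_ne_of_ne hjp.symm hkp.symm]
      have e4 : (u ∘ Equiv.swap j k) q = u q := by
        simp [Equiv.swap_apply_of_ne_of_ne hjq.symm hkq.symm]
      rw [e3, e4] at e2
      have f0 := hh _ hu
      have f1 := hh _ hu1
      have f2 := hh _ hu2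
      rcases hf _ hu with g0 | g0 <;> rcases hf _ hu1 with g1 | g1 <;>
        rcases hf _ hu2 with g2 | g2 <;> linarith)
  refine ⟨j, fun u hu v hv huv => ?_⟩
  obtain ⟨k, hk⟩ : ∃ k : Fin n, k ≠ j := by
    have : Nontrivial (Fin n) := Fin.nontrivial_iff_two_le.2 (by omega)
    exact exists_ne j
  have hconst : ∀ m, m ≠ j → h m (u m) - h m (v m) = h k (u m) - h k (v m) := by
    intro m hm
    have := hj m k hm hk
    push Not at this
    linarith [this (u m) (v m)]
  obtain ⟨σ, rfl⟩ := exists_perm_comp hu hv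
  rw [hh _ hu, hh _ hv]
  have h1 : ∑ m, (h m (u m) - h m ((u ∘ σ) m)) = ∑ m, (h k (u m) - h k ((u ∘ σ) m)) := by
    refine Finset.sum_congr rfl fun m _ => ?_
    by_cases hm : m = j
    · subst hm
      rw [huv]; ring
    · exact hconst m hm
  rw [Finset.sum_sub_distrib, Finset.sum_sub_distrib] at h1
  have h2 : ∑ m, h k ((u ∘ σ) m) = ∑ m, h k (u m) := Equiv.sum_comp σ fun m => h k (u m)
  linarith


/-- The permutation action on real functions on `[ℓ]^n`. -/
def permRep (ℓ n : ℕ) : Equiv.Perm (Fin n) →*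
    (EuclideanSpace ℝ (Fin n → Fin ℓ) →ₗ[ℝ] EuclideanSpace ℝ (Fin n → Fin ℓ)) where
  toFun g :=
    { toFun := fun f => WithLp.toLp 2 fun u => f (u ∘ g)
      map_add' := fun _ _ => rfl
      map_smul' := fun _ _ => rfl }
  map_one' := rfl
  map_mul' _ _ := rfl

theorem permRep_apply (ℓ n : ℕ) (g : Equiv.Perm (Fin n)) (f : EuclideanSpace ℝ (Fin n → Fin ℓ))
    (u : Fin n → Fin ℓ) : permRep ℓ n g f u = f (u ∘ g) := rfl

theorem sum_comp_perm {ℓ n : ℕ} (g : Equiv.Perm (Fin n)) (F : (Fin n → Fin ℓ) → ℝ) :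
    ∑ u, F (u ∘ g) = ∑ u, F u := by
  refine Finset.sum_nbij' (fun u => u ∘ g) (fun u => u ∘ g.symm) ?_ ?_ ?_ ?_ ?_ <;>
    intros <;> simp [Function.comp_assoc]

theorem permRep_inner (ℓ n : ℕ) (g : Equiv.Perm (Fin n))
    (x y : EuclideanSpace ℝ (Fin n → Fin ℓ)) :
    inner ℝ (permRep ℓ n g x) (permRep ℓ n g y) = inner ℝ x y := by
  simp only [PiLp.inner_apply, permRep_apply]
  exact sum_comp_perm g fun u => inner ℝ (x u) (y u)

/-- The indicator function. -/
def indA {ℓ n : ℕ} (A : Finset (Fin n → Fin ℓ)) : EuclideanSpace ℝ (Fin n → Fin ℓ) :=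
  WithLp.toLp 2 fun u => if u ∈ A then 1 else 0

theorem indA_apply {ℓ n : ℕ} (A : Finset (Fin n → Fin ℓ)) (u : Fin n → Fin ℓ) :
    indA A u = if u ∈ A then 1 else 0 := rfl

theorem norm_indA_sq {ℓ n : ℕ} (A : Finset (Fin n → Fin ℓ)) : ‖indA A‖ ^ 2 = A.card := by
  rw [EuclideanSpace.norm_sq_eq]
  simp [indA_apply, apply_ite]

theorem norm_indA_sub_swap {ℓ n : ℕ} (A : Finset (Fin n → Fin ℓ)) (j k : Fin n) :
    ‖indA A - permRep ℓ n (Equiv.swap j k) (indA A)‖ ^ 2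
      = 2 * ∑ u ∈ A, if u ∘ Equiv.swap j k ∉ A then (1 : ℝ) else 0 := by
  rw [EuclideanSpace.norm_sq_eq]
  simp only [PiLp.sub_apply, permRep_apply, indA_apply]
  have h1 : ∀ u : Fin n → Fin ℓ, ‖(if u ∈ A then (1 : ℝ) else 0)
      - if u ∘ Equiv.swap j k ∈ A then 1 else 0‖ ^ 2
      = (if u ∈ A then (if u ∘ Equiv.swap j k ∉ A then (1 : ℝ) else 0) else 0)
        + (if u ∘ Equiv.swap j k ∈ A then (if u ∉ A then (1 : ℝ) else 0) else 0) := by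
    intro u
    by_cases a : u ∈ A <;> by_cases b : u ∘ Equiv.swap j k ∈ A <;> simp [a, b]
  simp only [h1]
  rw [Finset.sum_add_distrib]
  have h2 := sum_comp_perm (Equiv.swap j k)
    fun u : Fin n → Fin ℓ =>
      if u ∘ Equiv.swap j k ∈ A then (if u ∉ A then (1 : ℝ) else 0) else 0
  have h3 : ∀ u : Fin n → Fin ℓ, (u ∘ Equiv.swap j k) ∘ Equiv.swap j k = u := fun u => by
    ext1 a; simp
  simp only [h3] at h2
  rw [← h2, ← two_mul, ← Finset.sum_filter]
  congr 1
  simp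

theorem dirich_indA {ℓ n : ℕ} (A : Finset (Fin n → Fin ℓ)) :
    dirich (permRep ℓ n) Finset.univ (indA A)
      = 2 * ∑ u ∈ A, ((Finset.univ.filter fun q : Fin n × Fin n =>
          q.1 ≠ q.2 ∧ (u ∘ Equiv.swap q.1 q.2) ∉ A).card : ℝ) := by
  unfold dirich
  simp only [norm_indA_sub_swap]
  rw [← Finset.sum_product', ← Finset.mul_sum, Finset.sum_comm]
  congr 1
  refine Finset.sum_congr rfl fun u hu => ?_
  rw [Finset.card_filter, Nat.cast_sum]
  refine Finset.sum_congr rfl fun q _ => ?_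
  by_cases hq : q.1 = q.2
  · simp [hq, hu]
  · simp [hq]

theorem av_univ_indA {ℓ n : ℕ} {κ : Fin ℓ → ℕ} {A : Finset (Fin n → Fin ℓ)}
    (hA : A ⊆ multislice ℓ n κ) :
    av (permRep ℓ n) Finset.univ (indA A) = msVol ℓ n κ A • indA (multislice ℓ n κ) := by
  set P := av (permRep ℓ n) Finset.univ (indA A) with hP
  have hinv : ∀ g : Equiv.Perm (Fin n), ∀ u, P (u ∘ g) = P u := by
    intro g u
    have := av_inv (permRep ℓ n) (T := Finset.univ) (g := g) (by simp [mem_permsOn]) (indA A)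
    conv_rhs => rw [hP, ← this]
    rfl
  have hav : ∀ u, P u = ((permsOn (Finset.univ : Finset (Fin n))).card : ℝ)⁻¹ *
      ∑ g ∈ permsOn Finset.univ, indA A (u ∘ g) := by
    intro u
    rw [hP, av_apply]
    simp [permRep_apply]
  have hzero : ∀ u, u ∉ multislice ℓ n κ → P u = 0 := by
    intro u hu
    rw [hav, Finset.sum_eq_zero, mul_zero]
    intro g _
    rw [indA_apply, if_neg]
    intro h
    apply hu
    have := comp_perm_mem (hA h) g⁻¹
    have h2 : (u ∘ g) ∘ ⇑g⁻¹ = u := by ext1; simp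
    rwa [h2] at this
  have hsum : ∑ u, P u = A.card := by
    simp only [hav]
    rw [← Finset.mul_sum, Finset.sum_comm]
    have : ∀ g ∈ permsOn (Finset.univ : Finset (Fin n)),
        ∑ u : Fin n → Fin ℓ, indA A (u ∘ g) = A.card := by
      intro g _
      rw [sum_comp_perm g fun u => indA A u]
      simp [indA_apply]
    rw [Finset.sum_congr rfl this, Finset.sum_const, nsmul_eq_mul, ← mul_assoc,
      inv_mul_cancel₀ (permsOn_card_ne _), one_mul]
  ext u
  simp only [PiLp.smul_apply, indA_apply, smul_eq_mul]
  by_cases hu : u ∈ multislice ℓ n κ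
  · rw [if_pos hu, mul_one]
    have hc : ∀ v ∈ multislice ℓ n κ, P v = P u := by
      intro v hv
      obtain ⟨σ, rfl⟩ := exists_perm_comp hu hv
      exact hinv σ u
    rw [← Finset.sum_subset (Finset.subset_univ (multislice ℓ n κ)) fun v _ hv => hzero v hv,
      Finset.sum_congr rfl hc, Finset.sum_const, nsmul_eq_mul] at hsum
    have : ((multislice ℓ n κ).card : ℝ) ≠ 0 := by
      have := Finset.card_pos.2 ⟨u, hu⟩
      positivity
    rw [msVol, ← hsum]
    field_simp
  · rw [if_neg hu, mul_zero, hzero u hu]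

theorem exists_fun_of_inv {ℓ n : ℕ} {κ : Fin ℓ → ℕ} (x : EuclideanSpace ℝ (Fin n → Fin ℓ))
    (m : Fin n) : ∃ h : Fin ℓ → ℝ, ∀ u ∈ multislice ℓ n κ,
      av (permRep ℓ n) (Finset.univ.erase m) x u = h (u m) := by
  classical
  refine ⟨fun i => if hi : ∃ u ∈ multislice ℓ n κ, u m = i then
    av (permRep ℓ n) (Finset.univ.erase m) x hi.choose else 0, fun u hu => ?_⟩
  have hi : ∃ v ∈ multislice ℓ n κ, v m = u m := ⟨u, hu, rfl⟩
  simp only [dif_pos hi]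
  obtain ⟨hv, hvm⟩ := hi.choose_spec
  obtain ⟨σ, hσ, hσ'⟩ := exists_perm_fix hv hu hvm
  have := av_inv (permRep ℓ n) (T := Finset.univ.erase m) (g := σ)
    (by simp [mem_permsOn, hσ]) x
  conv_rhs => rw [← this]
  rw [permRep_apply, hσ']

theorem multislice_iso_aux (ℓ n : ℕ) (hn : 4 ≤ n)
    (κ : Fin ℓ → ℕ) (hκ : ∀ i, 2 ≤ κ i)
    (A : Finset (Fin n → Fin ℓ)) (hA : A ⊆ multislice ℓ n κ) (hne : A.Nonempty)
    (heq : msExpansion ℓ n A = 2 * (1 - msVol ℓ n κ A) / ((n : ℝ) - 1)) :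
    ∃ (j : Fin n) (S : Finset (Fin ℓ)),
      A = (multislice ℓ n κ).filter fun u => u j ∈ S := by
  obtain ⟨u₀, hu₀⟩ := hne
  have hAc : (A.card : ℝ) ≠ 0 := by
    have := Finset.card_pos.2 ⟨u₀, hu₀⟩
    positivity
  have hn' : (4 : ℝ) ≤ n := by exact_mod_cast hn
  have hn1 : (n : ℝ) - 1 ≠ 0 := by linarith
  have hn0 : (n : ℝ) ≠ 0 := by linarith
  have hM : ((multislice ℓ n κ).card : ℝ) ≠ 0 := by
    have := Finset.card_pos.2 ⟨u₀, hA hu₀⟩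
    positivity
  have hnorm : ‖indA A - av (permRep ℓ n) Finset.univ (indA A)‖ ^ 2
      = A.card * (1 - msVol ℓ n κ A) := by
    rw [norm_sub_av _ (permRep_inner ℓ n), ← av_inner_self _ (permRep_inner ℓ n),
      real_inner_self_eq_norm_sq, av_univ_indA hA, norm_smul, mul_pow, norm_indA_sq, norm_indA_sq,
      Real.norm_eq_abs, sq_abs, msVol]
    field_simp
  have hD := dirich_indA A
  have hE : (∑ u ∈ A, ((Finset.univ.filter fun q : Fin n × Fin n =>
      q.1 ≠ q.2 ∧ (u ∘ Equiv.swap q.1 q.2) ∉ A).card : ℝ))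
      = 2 * n * (A.card * (1 - msVol ℓ n κ A)) := by
    rw [msExpansion, div_eq_div_iff (by positivity) hn1] at heq
    apply mul_right_cancel₀ hn1
    rw [heq]; ring
  have key := poincare_eq (permRep ℓ n) (permRep_inner ℓ n) Finset.univ
    (by simp; omega) (indA A) (by
      rw [hnorm, hD, hE, Finset.card_univ, Fintype.card_fin]; ring)
  rw [Finset.card_univ, Fintype.card_fin, av_univ_indA hA] at key
  choose h hh using fun m => exists_fun_of_inv (κ := κ) (indA A) m
  obtain ⟨j, hj⟩ := boolean_degree_one hn hκ (fun u => indA A u)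
    (fun u _ => by
      rw [indA_apply]
      by_cases hu : u ∈ A <;> simp [hu])
    (-(((n : ℝ) - 2) * msVol ℓ n κ A))
    (fun m i => ((n : ℝ) - 1) / n * h m i)
    (fun u hu => by
      have h1 := congrArg (fun f : EuclideanSpace ℝ (Fin n → Fin ℓ) => f u) key
      simp only [PiLp.smul_apply, PiLp.sub_apply, smul_eq_mul, WithLp.ofLp_sum,
        Finset.sum_apply] at h1
      rw [Finset.sum_congr rfl fun m _ => hh m u hu, indA_apply (multislice ℓ n κ),
        if_pos hu] at h1
      rw [← Finset.mul_sum]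
      apply mul_left_cancel₀ hn0
      rw [h1]
      field_simp
      ring) (hA hu₀)
  refine ⟨j, A.image fun u => u j, ?_⟩
  ext u
  rw [Finset.mem_filter, Finset.mem_image]
  constructor
  · intro hu
    exact ⟨hA hu, u, hu, rfl⟩
  · rintro ⟨hu, v, hv, hvu⟩
    have := hj v (hA hv) u hu hvu
    simp only [indA_apply, if_pos hv] at this
    by_contra hcon
    rw [if_neg hcon] at this
    exact one_ne_zero this

/-- If the edge-isoperimetric inequality is tight for `A` (and all `κ_i ≥ 2`), then `A` is a
dictator: membership depends only on the colour of a single coordinate. -/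
theorem multislice_isoperimetry_equality (ℓ n : ℕ) (hℓ : 2 ≤ ℓ) (hn : 4 ≤ n)
    (κ : Fin ℓ → ℕ) (hκ : ∀ i, 2 ≤ κ i) (hsum : ∑ i, κ i = n)
    (A : Finset (Fin n → Fin ℓ)) (hA : A ⊆ multislice ℓ n κ) (hne : A.Nonempty)
    (α : ℝ) (hα : msVol ℓ n κ A = α)
    (heq : msExpansion ℓ n A = 2 * (1 - α) / ((n : ℝ) - 1)) :
    ∃ (j : Fin n) (S : Finset (Fin ℓ)),
      A = (multislice ℓ n κ).filter fun u => u j ∈ S := by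
  subst hα
  exact multislice_iso_aux ℓ n hn κ hκ A hA hne heq
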